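/- Let G_1 and G_2 be two vertex-disjoint 2-edge-colored graphs with Hamiltonian alternating cycles C_1 and C_2 respectively, and let G ∈ G_1 ⊕ G_2. If there is no good pair in G, and for each i ∈ {1,2} there is at least one vertex of C_i that is non-singular with respect to C_{3−i}, then every vertex w of G satisfies d_r(w) ≥ 1 and d_b(w) ≥ 1; in particular, no vertex of C_i is singular with respect to C_{3−i}, for i ∈ {1,2}. -/

import Mathlib

/-- An alternating cycle of length `N` in the 2-edge-colored graph `(G, c)`
(colors: `true` = red, `false` = blue). -/
def IsAltCycle {V : Type*} (G : SimpleGraph V) (c : Sym2 V → Bool) {N : ℕ}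
    (x : ZMod N → V) : Prop :=
  Function.Injective x ∧ (∀ i, G.Adj (x i) (x (i + 1))) ∧
    ∀ i, c s(x i, x (i + 1)) ≠ c s(x (i + 1), x (i + 2))

/-- There is a good pair of edges between the two vertex-disjoint alternating
cycles `x` and `y`. -/
def HasGoodPair {V : Type*} (G : SimpleGraph V) (c : Sym2 V → Bool) {N M : ℕ}
    (x : ZMod N → V) (y : ZMod M → V) : Prop :=
  ∃ (s s' : ZMod N) (t t' : ZMod M),
    (s' = s - 1 ∨ s' = s + 1) ∧ (t' = t - 1 ∨ t' = t + 1) ∧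
    G.Adj (x s) (y t) ∧ G.Adj (x s') (y t') ∧
    c s(x s, x s') = c s(x s, y t) ∧
    c s(x s', y t') = c s(x s, y t) ∧
    c s(y t', y t) = c s(x s, y t)

/-- `G` is a colored generalized sum `G ∈ G₁ ⊕ G₂` of two vertex-disjoint 2-edge-colored
graphs `G₁`, `G₂` with Hamiltonian alternating cycles `C₁ = x` (of length `2n`) and
`C₂ = y` (of length `2m`): here `G₁`, `G₂` are the induced colored subgraphs of `G` on
`V(G₁) = range x` and `V(G₂) = range y`, so the conditions are that `x` and `y` are
alternating cycles of `G` with disjoint ranges covering `V(G)` (Hamiltonicity of `Cᵢ`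
in `Gᵢ`), and between any two vertices of different parts there is exactly one
(arbitrarily colored) edge of `G`. -/
def IsCGSHam {V : Type*} (G : SimpleGraph V) (c : Sym2 V → Bool) {n m : ℕ}
    (x : ZMod (2 * n) → V) (y : ZMod (2 * m) → V) : Prop :=
  IsAltCycle G c x ∧ IsAltCycle G c y ∧
  Disjoint (Set.range x) (Set.range y) ∧
  (∀ v : V, v ∈ Set.range x ∪ Set.range y) ∧
  (∀ (i : ZMod (2 * n)) (j : ZMod (2 * m)), G.Adj (x i) (y j))

/-- The set of exterior edges of a colored generalized sum with parts `range x` and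
`range y`: the edges joining the two parts. -/
def extEdges {V : Type*} {N M : ℕ} (x : ZMod N → V) (y : ZMod M → V) : Set (Sym2 V) :=
  {e | ∃ i j, e = s(x i, y j)}

/-- The number of red exterior edges incident with `v`. -/
noncomputable def dred {V : Type*} (c : Sym2 V → Bool) {N M : ℕ}
    (x : ZMod N → V) (y : ZMod M → V) (v : V) : ℕ :=
  {e : Sym2 V | e ∈ extEdges x y ∧ v ∈ e ∧ c e = true}.ncard

/-- The number of blue exterior edges incident with `v`. -/
noncomputable def dblue {V : Type*} (c : Sym2 V → Bool) {N M : ℕ}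
    (x : ZMod N → V) (y : ZMod M → V) (v : V) : ℕ :=
  {e : Sym2 V | e ∈ extEdges x y ∧ v ∈ e ∧ c e = false}.ncard

/-- The vertex `x i` of `C₁` is singular with respect to `C₂`: the set of edges from
`x i` to `V(C₂)` (in a colored generalized sum these are all pairs `x i - y j`) is
nonempty and they all have the same color. -/
def SingularX {V : Type*} (c : Sym2 V → Bool) {N M : ℕ}
    (x : ZMod N → V) (y : ZMod M → V) (i : ZMod N) : Prop :=
  (∃ _j : ZMod M, True) ∧ ∀ j j' : ZMod M, c s(x i, y j) = c s(x i, y j')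

/-- The vertex `y j` of `C₂` is singular with respect to `C₁`. -/
def SingularY {V : Type*} (c : Sym2 V → Bool) {N M : ℕ}
    (x : ZMod N → V) (y : ZMod M → V) (j : ZMod M) : Prop :=
  (∃ _i : ZMod N, True) ∧ ∀ i i' : ZMod N, c s(x i, y j) = c s(x i', y j)

/-! A vertex `v` of `C₁` all of whose exterior edges have color `κ` has a neighbor `v'` on `C₁`
with `vv'` of color `κ`. Every `y_j` likewise has a neighbor `y_t` on `C₂` with `y_j y_t` of color
`κ`, so `v'y_j` of color `κ` would give the good pair `v y_t`, `v'y_j`. Hence all exterior edges of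
`v'` have the color opposite to `κ`, which is also the color of the next edge of `C₁` after `vv'`.
Continuing in this direction around `C₁`, one singular vertex makes every vertex of `C₁` singular.
-/

section Cycles

variable {V : Type*} {G : SimpleGraph V} {c : Sym2 V → Bool} {N M : ℕ}
  {x : ZMod N → V} {y : ZMod M → V}

/-- A cyclic sequence of vertices, possibly with repetitions, in which the pairs of consecutive
vertices alternate in color: the coloring condition of an alternating cycle. -/
def IsAlternating (c : Sym2 V → Bool) (x : ZMod N → V) : Prop :=
  ∀ i, c s(x i, x (i + 1)) ≠ c s(x (i + 1), x (i + 2))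

/-- The notions red-singular (`κ = true`) and blue-singular (`κ = false`), for a vertex `v` with
respect to a family `y` of vertices to which it is completely joined. -/
def IsColorSingular {ι : Type*} (c : Sym2 V → Bool) (κ : Bool) (y : ι → V) (v : V) : Prop :=
  ∀ j, c s(v, y j) = κ

/-- The number of exterior edges of color `κ` incident with `v`: the common form of `d_r` and
`d_b`. -/
noncomputable def colorDegree (c : Sym2 V → Bool) (κ : Bool) (x : ZMod N → V) (y : ZMod M → V)
    (v : V) : ℕ :=
  {e : Sym2 V | e ∈ extEdges x y ∧ v ∈ e ∧ c e = κ}.ncard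

theorem hasGoodPair_comm : HasGoodPair G c x y ↔ HasGoodPair G c y x := by
  suffices swap : ∀ {N M : ℕ} {x : ZMod N → V} {y : ZMod M → V},
      HasGoodPair G c x y → HasGoodPair G c y x from ⟨swap, swap⟩
  rintro N M x y ⟨s, s', t, t', hs, ht, hst, hst', hx, hxy, hy⟩
  refine ⟨t, t', s, s', ht, hs, hst.symm, hst'.symm, ?_⟩
  rw [Sym2.eq_swap (a := y t) (b := y t'), Sym2.eq_swap (a := y t) (b := x s),
    Sym2.eq_swap (a := y t') (b := x s'), Sym2.eq_swap (a := x s') (b := x s)]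
  exact ⟨hy, hxy, hx⟩

theorem singularY_iff_singularX {j : ZMod M} : SingularY c x y j ↔ SingularX c y x j := by
  simp only [SingularY, SingularX, Sym2.eq_swap (a := y j)]

theorem extEdges_comm : extEdges x y = extEdges y x := by
  ext e
  constructor <;> rintro ⟨i, j, rfl⟩ <;> exact ⟨j, i, Sym2.eq_swap⟩

theorem colorDegree_comm {κ : Bool} {v : V} : colorDegree c κ x y v = colorDegree c κ y x v := by
  rw [colorDegree, extEdges_comm, colorDegree]

theorem extEdges_finite [NeZero N] [NeZero M] : (extEdges x y).Finite := by
  refine (Set.finite_range fun p : ZMod N × ZMod M => s(x p.1, y p.2)).subset ?_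
  rintro _ ⟨i, j, rfl⟩
  exact ⟨(i, j), rfl⟩

theorem colorDegree_pos_iff [NeZero N] [NeZero M] {κ : Bool} {v : V} :
    0 < colorDegree c κ x y v ↔ ∃ e ∈ extEdges x y, v ∈ e ∧ c e = κ :=
  Set.ncard_pos (extEdges_finite.subset fun _ he => he.1)

theorem singularX_iff_exists_isColorSingular {i : ZMod N} :
    SingularX c x y i ↔ ∃ κ, IsColorSingular c κ y (x i) :=
  ⟨fun h => ⟨c s(x i, y 0), fun j => h.2 j 0⟩,
    fun ⟨_, hκ⟩ => ⟨⟨0, trivial⟩, fun j j' => (hκ j).trans (hκ j').symm⟩⟩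

theorem exists_color_eq_of_not_singularX {i : ZMod N} (h : ¬ SingularX c x y i) (κ : Bool) :
    ∃ j, c s(x i, y j) = κ := by
  contrapose! h
  exact singularX_iff_exists_isColorSingular.2 ⟨!κ, fun j => Bool.eq_not_of_ne (h j)⟩

theorem colorDegree_pos_of_not_singularX [NeZero N] [NeZero M] {i : ZMod N}
    (h : ¬ SingularX c x y i) (κ : Bool) : 0 < colorDegree c κ x y (x i) := by
  obtain ⟨j, hj⟩ := exists_color_eq_of_not_singularX h κ
  exact colorDegree_pos_iff.2 ⟨_, ⟨i, j, rfl⟩, Sym2.mem_mk_left _ _, hj⟩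

theorem colorDegree_pos_of_not_singularY [NeZero N] [NeZero M] {j : ZMod M}
    (h : ¬ SingularY c x y j) (κ : Bool) : 0 < colorDegree c κ x y (y j) :=
  colorDegree_comm ▸ colorDegree_pos_of_not_singularX (mt singularY_iff_singularX.2 h) κ

theorem IsAlternating.color_add_eq_not_color_sub (hx : IsAlternating c x) {d : ZMod N}
    (hd : d = 1 ∨ d = -1) (i : ZMod N) : c s(x i, x (i + d)) = !c s(x i, x (i - d)) := by
  have hne : c s(x i, x (i - 1)) ≠ c s(x i, x (i + 1)) := by
    have h := hx (i - 1)
    rwa [sub_add_cancel, show i - 1 + 2 = i + 1 by ring, Sym2.eq_swap] at h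
  rcases hd with rfl | rfl
  · exact Bool.eq_not_of_ne hne.symm
  · simpa only [← sub_eq_add_neg, sub_neg_eq_add] using Bool.eq_not_of_ne hne

theorem IsAlternating.exists_step_color_eq (hx : IsAlternating c x) (i : ZMod N) (κ : Bool) :
    ∃ d : ZMod N, (d = 1 ∨ d = -1) ∧ c s(x i, x (i + d)) = κ := by
  by_cases hprev : c s(x i, x (i - 1)) = κ
  · exact ⟨-1, Or.inr rfl, by rwa [← sub_eq_add_neg]⟩
  · refine ⟨1, Or.inl rfl, ?_⟩
    rw [hx.color_add_eq_not_color_sub (Or.inl rfl), Bool.eq_not_of_ne hprev, Bool.not_not]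

theorem IsAlternating.color_step_eq_not (hx : IsAlternating c x) {d : ZMod N}
    (hd : d = 1 ∨ d = -1) (i : ZMod N) :
    c s(x (i + d), x (i + d + d)) = !c s(x i, x (i + d)) := by
  rw [hx.color_add_eq_not_color_sub hd, add_sub_cancel_right, Sym2.eq_swap]

theorem IsColorSingular.add_step (hy : IsAlternating c y) (hadj : ∀ i j, G.Adj (x i) (y j))
    (hgp : ¬ HasGoodPair G c x y) {d : ZMod N} (hd : d = 1 ∨ d = -1) {i : ZMod N} {κ : Bool}
    (hi : IsColorSingular c κ y (x i)) (hstep : c s(x i, x (i + d)) = κ) :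
    IsColorSingular c (!κ) y (x (i + d)) := by
  refine fun j => Bool.eq_not_of_ne fun hj => hgp ?_
  obtain ⟨δ, hδ, hjδ⟩ := hy.exists_step_color_eq j κ
  have hd' : i + d = i - 1 ∨ i + d = i + 1 := by
    rcases hd with rfl | rfl <;> simp [sub_eq_add_neg]
  have hδ' : j = j + δ - 1 ∨ j = j + δ + 1 := by rcases hδ with rfl | rfl <;> simp
  exact ⟨i, i + d, j + δ, j, hd', hδ', hadj _ _, hadj _ _, hstep.trans (hi _).symm,
    hj.trans (hi _).symm, hjδ.trans (hi _).symm⟩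

theorem IsColorSingular.add_nsmul (hx : IsAlternating c x) (hy : IsAlternating c y)
    (hadj : ∀ i j, G.Adj (x i) (y j)) (hgp : ¬ HasGoodPair G c x y) {d : ZMod N}
    (hd : d = 1 ∨ d = -1) {i : ZMod N} (hi : IsColorSingular c (c s(x i, x (i + d))) y (x i))
    (k : ℕ) :
    IsColorSingular c (c s(x (i + k • d), x (i + k • d + d))) y (x (i + k • d)) := by
  induction k with
  | zero => simpa only [zero_nsmul, add_zero] using hi
  | succ k ih =>
    rw [succ_nsmul, ← add_assoc, hx.color_step_eq_not hd]
    exact ih.add_step hy hadj hgp hd rfl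

theorem exists_nsmul_eq_of_eq_one_or_neg_one [NeZero N] {d : ZMod N} (hd : d = 1 ∨ d = -1)
    (a : ZMod N) : ∃ k : ℕ, k • d = a := by
  refine ⟨(a * d).val, ?_⟩
  rw [nsmul_eq_mul, ZMod.natCast_zmod_val, mul_assoc]
  rcases hd with rfl | rfl <;> simp

theorem SingularX.forall_singularX [NeZero N] (hx : IsAlternating c x) (hy : IsAlternating c y)
    (hadj : ∀ i j, G.Adj (x i) (y j)) (hgp : ¬ HasGoodPair G c x y) {i : ZMod N}
    (hi : SingularX c x y i) (i' : ZMod N) : SingularX c x y i' := by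
  obtain ⟨κ, hκ⟩ := singularX_iff_exists_isColorSingular.1 hi
  obtain ⟨d, hd, rfl⟩ := hx.exists_step_color_eq i κ
  obtain ⟨k, hk⟩ := exists_nsmul_eq_of_eq_one_or_neg_one hd (i' - i)
  obtain rfl : i + k • d = i' := by rw [hk, add_sub_cancel]
  exact singularX_iff_exists_isColorSingular.2 ⟨_, hκ.add_nsmul hx hy hadj hgp hd k⟩

theorem SingularY.forall_singularY [NeZero M] (hx : IsAlternating c x) (hy : IsAlternating c y)
    (hadj : ∀ i j, G.Adj (x i) (y j)) (hgp : ¬ HasGoodPair G c x y) {j : ZMod M}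
    (hj : SingularY c x y j) (j' : ZMod M) : SingularY c x y j' :=
  singularY_iff_singularX.2 <| (singularY_iff_singularX.1 hj).forall_singularX hy hx
    (fun j i => (hadj i j).symm) (mt hasGoodPair_comm.2 hgp) j'

end Cycles

theorem no_singular_vertices_general {V : Type*} (G : SimpleGraph V) (c : Sym2 V → Bool)
    {N M : ℕ} [NeZero N] [NeZero M] (x : ZMod N → V) (y : ZMod M → V)
    (hx : IsAlternating c x) (hy : IsAlternating c y) (hadj : ∀ i j, G.Adj (x i) (y j))
    (hgp : ¬ HasGoodPair G c x y)
    (hns1 : ∃ i, ¬ SingularX c x y i) (hns2 : ∃ j, ¬ SingularY c x y j) :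
    (∀ w ∈ Set.range x ∪ Set.range y, 1 ≤ dred c x y w ∧ 1 ≤ dblue c x y w) ∧
    (∀ i, ¬ SingularX c x y i) ∧ (∀ j, ¬ SingularY c x y j) := by
  obtain ⟨i₀, hi₀⟩ := hns1
  obtain ⟨j₀, hj₀⟩ := hns2
  have hX (i) : ¬ SingularX c x y i := fun hi => hi₀ (hi.forall_singularX hx hy hadj hgp i₀)
  have hY (j) : ¬ SingularY c x y j := fun hj => hj₀ (hj.forall_singularY hx hy hadj hgp j₀)
  refine ⟨?_, hX, hY⟩
  rintro _ (⟨i, rfl⟩ | ⟨j, rfl⟩)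
  · exact ⟨colorDegree_pos_of_not_singularX (hX i) true,
      colorDegree_pos_of_not_singularX (hX i) false⟩
  · exact ⟨colorDegree_pos_of_not_singularY (hY j) true,
      colorDegree_pos_of_not_singularY (hY j) false⟩

/-- Let `G ∈ G₁ ⊕ G₂` where `G₁`, `G₂` have Hamiltonian alternating
cycles `C₁ = x`, `C₂ = y`. If `G` has no good pair and each `Cᵢ` has a vertex that is
non-singular with respect to `C_{3-i}`, then every vertex `w` of `G` satisfies
`d_r(w) ≥ 1` and `d_b(w) ≥ 1`; in particular no vertex of `Cᵢ` is singular with respect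
to `C_{3-i}`. -/
theorem no_singular_vertices {V : Type*} (G : SimpleGraph V) (c : Sym2 V → Bool)
    {n m : ℕ} (hn : 0 < n) (hm : 0 < m)
    (x : ZMod (2 * n) → V) (y : ZMod (2 * m) → V)
    (hG : IsCGSHam G c x y) (hgp : ¬ HasGoodPair G c x y)
    (hns1 : ∃ i, ¬ SingularX c x y i) (hns2 : ∃ j, ¬ SingularY c x y j) :
    (∀ w : V, 1 ≤ dred c x y w ∧ 1 ≤ dblue c x y w) ∧
    (∀ i, ¬ SingularX c x y i) ∧ (∀ j, ¬ SingularY c x y j) := by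
  have : NeZero (2 * n) := ⟨by omega⟩
  have : NeZero (2 * m) := ⟨by omega⟩
  obtain ⟨⟨-, -, hx⟩, ⟨-, -, hy⟩, -, hcover, hadj⟩ := hG
  obtain ⟨hdeg, hX, hY⟩ := no_singular_vertices_general G c x y hx hy hadj hgp hns1 hns2
  exact ⟨fun w => hdeg w (hcover w), hX, hY⟩
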